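/- Let Ω ⊆ ℝ^N be a bounded open set, 1 < p < ∞ and q = p/(p−1). Let B : L^q(Ω) → L^p(Ω) be a positive continuous linear operator and g ∈ L^p(Ω). Suppose (z_k) ⊆ L^p(Ω) converges weakly in L^p(Ω) to z₀, (ν_k) ⊆ L^q(Ω) converges weakly in L^q(Ω) to ν₀, that z_k + B ν_k = g for every k and z₀ + B ν₀ = g, and that liminf_{k→∞} ∫_Ω ν_k z_k dx ≥ ∫_Ω ν₀ z₀ dx. Then lim_{k→∞} ∫_Ω ν_k z_k dx = ∫_Ω ν₀ z₀ dx and lim_{k→∞} ∫_Ω ν_k (B ν_k) dx = ∫_Ω ν₀ (B ν₀) dx. -/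

import Mathlib

open MeasureTheory Filter Topology

/-- Dual norm estimate: `L^r` norm bounded by the pairing with `L^s`. -/
theorem hec_norm_le_of_pairing {α : Type*} [MeasurableSpace α] {μ : Measure α} {r s : ℝ}
    (hrs : r.HolderConjugate s) (h : Lp ℝ (ENNReal.ofReal r) μ) (C : ℝ)
    (hC : ∀ w : Lp ℝ (ENNReal.ofReal s) μ, ∫ x, h x * w x ∂μ ≤ C * ‖w‖) : ‖h‖ ≤ C ∨ ‖h‖ = 0 := by
  have hr : 0 < r := hrs.pos
  have hs : 0 < s := hrs.symm.pos
  have hr1 : 0 < r - 1 := by linarith [hrs.lt]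
  have hmul : s * (r - 1) = r := by
    have := hrs.mul_eq_add
    linarith
  set w : α → ℝ := fun x => Real.sign (h x) * ‖h x‖ ^ (r - 1) with hw
  have hhm : AEStronglyMeasurable h μ := (Lp.memLp h).1
  have hsm : Measurable Real.sign :=
    Measurable.ite measurableSet_Iio measurable_const
      (Measurable.ite measurableSet_Ioi measurable_const measurable_const)
  have hwm : AEStronglyMeasurable w μ := by
    apply AEMeasurable.aestronglyMeasurable
    exact (hsm.comp_aemeasurable hhm.aemeasurable).mul
      (hhm.aemeasurable.norm.pow_const _)
  have hwn : ∀ x, ‖w x‖ = ‖(fun y => ‖h y‖ ^ (r - 1)) x‖ := by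
    intro x
    simp only [hw, norm_mul]
    rcases lt_trichotomy (h x) 0 with h1 | h1 | h1
    · simp [Real.sign_of_neg h1]
    · simp [h1, Real.zero_rpow hr1.ne']
    · simp [Real.sign_of_pos h1]
  have heW : eLpNorm w (ENNReal.ofReal s) μ
      = eLpNorm h (ENNReal.ofReal r) μ ^ (r - 1) := by
    rw [eLpNorm_congr_norm_ae (Eventually.of_forall hwn), eLpNorm_norm_rpow _ hr1,
      ← ENNReal.ofReal_mul hs.le, hmul]
  have hwL : MemLp w (ENNReal.ofReal s) μ := by
    refine ⟨hwm, ?_⟩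
    rw [heW]
    exact ENNReal.rpow_lt_top_of_nonneg hr1.le (Lp.memLp h).2.ne
  have hnw : ‖hwL.toLp w‖ = ‖h‖ ^ (r - 1) := by
    rw [Lp.norm_toLp, heW, Lp.norm_def, ENNReal.toReal_rpow]
  have hint : ∫ x, h x * (hwL.toLp w) x ∂μ = ‖h‖ ^ r := by
    have e1 : ∫ x, h x * (hwL.toLp w) x ∂μ = ∫ x, ‖h x‖ ^ r ∂μ := by
      apply integral_congr_ae
      filter_upwards [hwL.coeFn_toLp] with x hx
      rw [hx]
      simp only [hw]
      have e : ‖h x‖ ^ r = ‖h x‖ * ‖h x‖ ^ (r - 1) := by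
        rcases eq_or_ne (‖h x‖) 0 with h0 | h0
        · simp [h0, Real.zero_rpow hr.ne']
        · rw [Real.rpow_sub_one h0]; field_simp
      rw [e, ← mul_assoc]
      congr 1
      rcases lt_trichotomy (h x) 0 with h1 | h1 | h1
      · simp [Real.sign_of_neg h1, abs_of_neg h1]
      · simp [h1]
      · simp [Real.sign_of_pos h1, abs_of_pos h1]
    have hnn : 0 ≤ ∫ x, ‖h x‖ ^ r ∂μ := integral_nonneg fun x => by positivity
    rw [e1, Lp.norm_def, (Lp.memLp h).eLpNorm_eq_integral_rpow_norm
      (by simpa using hr) ENNReal.ofReal_ne_top, ENNReal.toReal_ofReal_eq_iff.2 (by positivity),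
      ENNReal.toReal_ofReal hr.le, Real.rpow_inv_rpow hnn hr.ne']
  rcases eq_or_ne (‖h‖) 0 with h0 | h0
  · exact Or.inr h0
  left
  have := hC (hwL.toLp w)
  rw [hint, hnw] at this
  have hpos : 0 < ‖h‖ := lt_of_le_of_ne (by rw [Lp.norm_def]; exact ENNReal.toReal_nonneg) h0.symm
  have e : ‖h‖ ^ r = ‖h‖ * ‖h‖ ^ (r - 1) := by
    rw [Real.rpow_sub_one h0]; field_simp
  rw [e] at this
  exact le_of_mul_le_mul_right this (by positivity)

/-- If `z_k → z₀` weakly in `L^p`, `ν_k → ν₀` weakly in `L^q`,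
`z_k + B ν_k = g` for every k, `z₀ + B ν₀ = g`, and
`liminf ∫ ν_k z_k ≥ ∫ ν₀ z₀`, then `∫ ν_k z_k → ∫ ν₀ z₀` and `∫ ν_k (B ν_k) → ∫ ν₀ (B ν₀)`. -/
theorem hammerstein_energy_convergence
    {N : ℕ} (hN : 1 ≤ N)
    (Ω : Set (EuclideanSpace ℝ (Fin N))) (hΩo : IsOpen Ω)
    (hΩb : Bornology.IsBounded Ω)
    (p q : ℝ) (hp1 : 1 < p) (hq : q = p / (p - 1))
    [Fact (1 ≤ ENNReal.ofReal p)] [Fact (1 ≤ ENNReal.ofReal q)]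
    (μ : Measure (EuclideanSpace ℝ (Fin N))) (hμ : μ = volume.restrict Ω)
    (B : Lp ℝ (ENNReal.ofReal q) μ →L[ℝ] Lp ℝ (ENNReal.ofReal p) μ)
    (hBpos : ∀ w : Lp ℝ (ENNReal.ofReal q) μ, 0 ≤ ∫ x, (B w) x * w x ∂μ)
    (g : Lp ℝ (ENNReal.ofReal p) μ)
    (z : ℕ → Lp ℝ (ENNReal.ofReal p) μ) (z₀ : Lp ℝ (ENNReal.ofReal p) μ)
    (ν : ℕ → Lp ℝ (ENNReal.ofReal q) μ) (ν₀ : Lp ℝ (ENNReal.ofReal q) μ)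
    -- weak convergence z_k → z₀ in L^p
    (hz : ∀ w : Lp ℝ (ENNReal.ofReal q) μ,
      Tendsto (fun k => ∫ x, (z k) x * w x ∂μ) atTop (𝓝 (∫ x, z₀ x * w x ∂μ)))
    -- weak convergence ν_k → ν₀ in L^q
    (hν : ∀ v : Lp ℝ (ENNReal.ofReal p) μ,
      Tendsto (fun k => ∫ x, (ν k) x * v x ∂μ) atTop (𝓝 (∫ x, ν₀ x * v x ∂μ)))
    (heq : ∀ k, z k + B (ν k) = g)
    (heq₀ : z₀ + B ν₀ = g)
    (hliminf : (∫ x, ν₀ x * z₀ x ∂μ) ≤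
      Filter.liminf (fun k => ∫ x, (ν k) x * (z k) x ∂μ) atTop) :
    Tendsto (fun k => ∫ x, (ν k) x * (z k) x ∂μ) atTop (𝓝 (∫ x, ν₀ x * z₀ x ∂μ)) ∧
    Tendsto (fun k => ∫ x, (ν k) x * (B (ν k)) x ∂μ) atTop
      (𝓝 (∫ x, ν₀ x * (B ν₀) x ∂μ)) := by
  have hc : p.HolderConjugate q := by
    rw [hq]; exact Real.HolderConjugate.conjExponent hp1
  haveI : ENNReal.HolderConjugate (ENNReal.ofReal q) (ENNReal.ofReal p) :=
    hc.symm.ennrealOfReal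
  let P := (ContinuousLinearMap.mul ℝ ℝ).lpPairing μ (ENNReal.ofReal q) (ENNReal.ofReal p)
  have hP : ∀ a b, ∫ x, a x * b x ∂μ = P a b := fun a b => by
    simp [P, ContinuousLinearMap.lpPairing_eq_integral]
  have hP' : ∀ (b : Lp ℝ (ENNReal.ofReal p) μ) (a : Lp ℝ (ENNReal.ofReal q) μ),
      ∫ x, b x * a x ∂μ = P a b := fun b a => by
    rw [← hP]; simp only [mul_comm]
  simp only [hP] at hν hliminf ⊢
  simp only [hP'] at hz hBpos
  have hBk : ∀ k, B (ν k) = g - z k := fun k => eq_sub_of_add_eq' (heq k)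
  have hB0 : B ν₀ = g - z₀ := eq_sub_of_add_eq' heq₀
  -- boundedness
  obtain ⟨C, hC⟩ : ∃ C, ∀ k, ‖P (ν k)‖ ≤ C := by
    apply banach_steinhaus
    intro v
    obtain ⟨C, hC⟩ := (hν v).norm.bddAbove_range
    exact ⟨C, fun k => hC ⟨k, rfl⟩⟩
  obtain ⟨D, hD⟩ : ∃ D, ∀ k, |P (ν k) (z k)| ≤ D := by
    have hC0 : 0 ≤ C := (norm_nonneg _).trans (hC 0)
    have hνb : ∀ k, ‖ν k‖ ≤ C := by
      intro k
      rcases hec_norm_le_of_pairing hc.symm (ν k) C (fun w => by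
        rw [hP]
        exact (le_abs_self _).trans (((P (ν k)).le_opNorm w).trans
          (mul_le_mul_of_nonneg_right (hC k) (norm_nonneg _)))) with h | h
      · exact h
      · rw [h]; exact hC0
    refine ⟨C * (‖g‖ + ‖B‖ * C), fun k => ?_⟩
    have e : z k = g - B (ν k) := eq_sub_of_add_eq (heq k)
    calc |P (ν k) (z k)| ≤ ‖P (ν k)‖ * ‖z k‖ := (P (ν k)).le_opNorm _
      _ ≤ C * (‖g‖ + ‖B‖ * C) := by
        apply mul_le_mul (hC k) _ (norm_nonneg _) hC0
        rw [e]
        refine (norm_sub_le _ _).trans ?_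
        gcongr
        exact (B.le_opNorm _).trans (by gcongr; exact hνb k)
  -- upper bound
  let c : ℕ → ℝ := fun k => P (ν k) z₀ + P ν₀ (z k) - P ν₀ z₀
  have hcl : Tendsto c atTop (𝓝 (P ν₀ z₀)) := by
    have := ((hν z₀).add (hz ν₀)).sub_const (P ν₀ z₀)
    simpa [c] using this
  have hle : ∀ k, P (ν k) (z k) ≤ c k := by
    intro k
    have h := hBpos (ν k - ν₀)
    rw [map_sub B, hBk, hB0] at h
    simp only [map_sub, ContinuousLinearMap.sub_apply] at h
    simp only [c]
    linarith
  have hbb : IsBoundedUnder (· ≥ ·) atTop (fun k => P (ν k) (z k)) :=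
    isBoundedUnder_of ⟨-D, fun k => (abs_le.1 (hD k)).1⟩
  have hba : IsBoundedUnder (· ≤ ·) atTop (fun k => P (ν k) (z k)) :=
    isBoundedUnder_of ⟨D, fun k => (abs_le.1 (hD k)).2⟩
  have hmain : Tendsto (fun k => P (ν k) (z k)) atTop (𝓝 (P ν₀ z₀)) := by
    refine tendsto_of_le_liminf_of_limsup_le hliminf ?_ hba hbb
    rw [← hcl.limsup_eq]
    exact limsup_le_limsup (Eventually.of_forall hle) hbb.isCoboundedUnder_le
      hcl.isBoundedUnder_le
  refine ⟨hmain, ?_⟩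
  simp only [hBk, hB0, map_sub]
  exact (hν g).sub hmain
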